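/- arXiv:1406.3464 — 3 statements merged into one kernel-verified Lean document; each statement's English description precedes it below -/
import Mathlib

section
/- If every n-maximal subgroup of a finite group G is K-𝔘-subnormal in G, then every (n−1)-maximal subgroup of G is supersoluble. -/
open Subgroup

/-- A finite group is supersoluble if it has a normal series, all of whose terms are
normal in the whole group, with cyclic factors. -/
def IsSupersoluble (G : Type*) [Group G] : Prop :=
  ∃ (n : ℕ) (c : Fin (n + 1) → Subgroup G) (hc : ∀ i, (c i).Normal),
    c 0 = ⊥ ∧ c (Fin.last n) = ⊤ ∧
    ∀ i : Fin n, c i.castSucc ≤ c i.succ ∧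
      haveI := (hc i.castSucc).subgroupOf (c i.succ)
      IsCyclic (↥(c i.succ) ⧸ ((c i.castSucc).subgroupOf (c i.succ)))

/-- `H` is a maximal subgroup of `K`, where `H ≤ K` are subgroups of a common group. -/
def IsMaximalIn {G : Type*} [Group G] (H K : Subgroup G) : Prop :=
  H ≤ K ∧ IsCoatom (H.subgroupOf K)

/-- The `n`-maximal subgroups of `G`: `0`-maximal is `G` itself, and an `(n+1)`-maximal
subgroup is a maximal subgroup of some `n`-maximal subgroup. -/
def IsNMaximal {G : Type*} [Group G] : ℕ → Subgroup G → Prop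
  | 0, H => H = ⊤
  | n + 1, H => ∃ K : Subgroup G, IsNMaximal n K ∧ IsMaximalIn H K

/-- `H` is `K`-`𝔘`-subnormal in `K`: there is a chain of subgroups
`H = H₀ ≤ H₁ ≤ ⋯ ≤ Hₜ = K` such that at each step either `H_{i-1}` is normal in `H_i`
or `H_i` modulo the core of `H_{i-1}` in `H_i` is supersoluble. -/
def IsKUSubnormalIn {G : Type*} [Group G] (H K : Subgroup G) : Prop :=
  ∃ (n : ℕ) (c : Fin (n + 1) → Subgroup G),
    c 0 = H ∧ c (Fin.last n) = K ∧
    ∀ i : Fin n, c i.castSucc ≤ c i.succ ∧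
      (((c i.castSucc).subgroupOf (c i.succ)).Normal ∨
        IsSupersoluble (↥(c i.succ) ⧸ ((c i.castSucc).subgroupOf (c i.succ)).normalCore))

/-- `H` is `K`-`𝔘`-subnormal in `G`. -/
def IsKUSubnormal {G : Type*} [Group G] (H : Subgroup G) : Prop :=
  IsKUSubnormalIn H ⊤

/-- `H` is `𝔘`-subnormal in `G`: there is a chain of subgroups
`H = H₀ ≤ H₁ ≤ ⋯ ≤ Hₙ = G` with `H_i` modulo the core of `H_{i-1}` in `H_i`
supersoluble at each step. -/
def IsUSubnormal {G : Type*} [Group G] (H : Subgroup G) : Prop :=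
  ∃ (n : ℕ) (c : Fin (n + 1) → Subgroup G),
    c 0 = H ∧ c (Fin.last n) = ⊤ ∧
    ∀ i : Fin n, c i.castSucc ≤ c i.succ ∧
      IsSupersoluble (↥(c i.succ) ⧸ ((c i.castSucc).subgroupOf (c i.succ)).normalCore)

/-- The supersoluble residual `G^𝔘` of `G`: the intersection of all normal subgroups `N`
of `G` with `G/N` supersoluble. -/
def ssResidual (G : Type*) [Group G] : Subgroup G :=
  ⨅ N ∈ {N : Subgroup G | ∃ hN : N.Normal, haveI := hN; IsSupersoluble (G ⧸ N)}, N

/-- `N` is a minimal normal subgroup of `G`. -/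
def IsMinimalNormal {G : Type*} [Group G] (N : Subgroup G) : Prop :=
  N.Normal ∧ N ≠ ⊥ ∧ ∀ M : Subgroup G, M.Normal → M ≤ N → M ≠ ⊥ → M = N

/-- `G` is minimal nonsupersoluble: not supersoluble, but all proper subgroups are. -/
def IsMinimalNonsupersoluble (G : Type*) [Group G] : Prop :=
  ¬ IsSupersoluble G ∧ ∀ H : Subgroup G, H ≠ ⊤ → IsSupersoluble H

/-- `G` is an `SDH`-group: minimal nonsupersoluble with `G^𝔘` a minimal normal subgroup. -/
def IsSDH (G : Type*) [Group G] : Prop :=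
  IsMinimalNonsupersoluble G ∧ IsMinimalNormal (ssResidual G)

/-- `H` is a Sylow `p`-subgroup of its ambient (finite) group. -/
def IsSylowSubgroup {G : Type*} [Group G] (p : ℕ) (H : Subgroup G) : Prop :=
  IsPGroup p H ∧ ¬ p ∣ H.index

/-- A finite group is Ore dispersive if, enumerating the prime divisors of `|G|`
in decreasing order as `p₁ > p₂ > ⋯ > pₙ`, for every `i` it has a normal subgroup of
order `p₁^{a₁} ⋯ p_i^{a_i}`. -/
def OreDispersive (G : Type*) [Group G] : Prop :=
  ∀ p : ℕ, p.Prime → ∃ N : Subgroup G, N.Normal ∧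
    Nat.card N =
      ∏ q ∈ (Nat.card G).primeFactors.filter (fun q => p ≤ q),
        q ^ (Nat.card G).factorization q

/-- `A/B` is a chief factor of `G`. -/
def IsChiefFactor {G : Type*} [Group G] (A B : Subgroup G) : Prop :=
  A.Normal ∧ B ≤ A ∧ ∃ hB : B.Normal,
    haveI := hB
    IsMinimalNormal (A.map (QuotientGroup.mk' B))

/-- The subgroups `H` and `K` of `G` are conjugate in `G`. -/
def ConjSubgroup {G : Type*} [Group G] (H K : Subgroup G) : Prop :=
  ∃ g : G, K = H.map (MulAut.conj g).toMonoidHom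

/-- The Frattini subgroup of a subgroup `H` of `G`, as a subgroup of `G`. -/
def frattiniIn {G : Type*} [Group G] (H : Subgroup G) : Subgroup G :=
  (frattini H).map H.subtype

/-- `G = P ⋊ (Q ⋊ R)` as an internal statement about subgroups `P`, `Q`, `R` of `G`. -/
def IsInternalSemidirect3 {G : Type*} [Group G] (P Q R : Subgroup G) : Prop :=
  P.Normal ∧ P ⊓ (Q ⊔ R) = ⊥ ∧ P ⊔ Q ⊔ R = ⊤ ∧
    (Q.subgroupOf (Q ⊔ R)).Normal ∧ Q ⊓ R = ⊥

/-- `G = P ⋊ (Q ⋊ (R ⋊ T))` as an internal statement about subgroups of `G`. -/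
def IsInternalSemidirect4 {G : Type*} [Group G] (P Q R T : Subgroup G) : Prop :=
  P.Normal ∧ P ⊓ (Q ⊔ R ⊔ T) = ⊥ ∧ P ⊔ Q ⊔ R ⊔ T = ⊤ ∧
    (Q.subgroupOf (Q ⊔ R ⊔ T)).Normal ∧ Q ⊓ (R ⊔ T) = ⊥ ∧
    (R.subgroupOf (R ⊔ T)).Normal ∧ R ⊓ T = ⊥
/-!
Let `M` be a maximal subgroup of an `n`-maximal subgroup `H` of `G`. In a `K`-`𝔘`-subnormal chain
from `M` to `G`, the last member not containing `H` meets `H` exactly in `M`, so the next step of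
the chain shows that `M` is normal in `H` or `H` modulo the core of `M` is supersoluble; in the
former case `H ⧸ M` is cyclic. Intersecting over all `M`, the quotient of `H` by its Frattini
subgroup is supersoluble, and it remains to see, following Huppert, that `H` is then supersoluble.

By induction we may take a minimal normal subgroup `R` contained in the Frattini subgroup, an
elementary abelian `p`-group with supersoluble quotient `H ⧸ R`. In a supersoluble group `X` the
subgroup `A = X'Xᵖ⁻¹` centralizes the chief factors of order `p`, so `A` is `p`-nilpotent, and `X`
has a normal `p'`-subgroup `T` modulo which `A` is a `p`-group. For `X = H ⧸ R` there are two cases.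
* If `T ≠ 1`, it contains a normal subgroup of prime order `q ≠ p`, which by the Frattini argument
  lifts to a normal `q`-subgroup `Q` of `H`. Then `H` embeds into `H ⧸ Q × H ⧸ R`.
* If `T = 1`, then `H'Hᵖ⁻¹` is a normal `p`-subgroup, so it centralizes `R`. Thus `H` acts on `R`
  through an abelian group of exponent dividing `p - 1`, whose elements are diagonalizable over
  `𝔽ₚ`, hence scalar by minimality of `R`, and `R` is cyclic.
-/

theorem exists_castSucc_and_not_succ {n : ℕ} {P : Fin (n + 1) → Prop} (h0 : P 0)
    (hlast : ¬P (Fin.last n)) : ∃ i : Fin n, P i.castSucc ∧ ¬P i.succ := by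
  contrapose! hlast
  exact Fin.induction h0 hlast (Fin.last n)

theorem exists_le_zpowers_sup_of_ker_le {G C : Type*} [Group G] [Group C] [IsCyclic C]
    {D N : Subgroup G} (f : D →* C) (hf : f.ker.map D.subtype ≤ N) :
    ∃ x ∈ D, D ≤ zpowers x ⊔ N := by
  obtain ⟨⟨_, x, rfl⟩, hx⟩ := IsCyclic.exists_generator (α := f.range)
  refine ⟨x, x.2, fun y hy => ?_⟩
  obtain ⟨k, hk⟩ := hx ⟨f ⟨y, hy⟩, ⟨y, hy⟩, rfl⟩
  have hker : (x ^ k)⁻¹ * ⟨y, hy⟩ ∈ f.ker :=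
    f.eq_iff.mp ((map_zpow f x k).trans (congrArg Subtype.val hk)).symm
  have := mul_mem_sup (zpow_mem_zpowers (x : G) k) (hf (mem_map_of_mem _ hker))
  simpa using this

theorem IsSupersoluble.exists_normal_zpowers_sup {G H : Type*} [Group G] [Group H]
    (hG : IsSupersoluble G) (φ : H →* G) {K N : Subgroup H} [K.Normal] [N.Normal] (hKN : ¬K ≤ N)
    (hker : K ⊓ φ.ker ≤ N) : ∃ x ∈ K, x ∉ N ∧ (zpowers x ⊔ N).Normal := by
  obtain ⟨n, c, hc, h0, hlast, hstep⟩ := hG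
  obtain ⟨i, hi, hi'⟩ := exists_castSucc_and_not_succ (P := fun i => K ⊓ (c i).comap φ ≤ N)
    (by rwa [h0]) (by simpa [hlast] using hKN)
  have := hc i.castSucc
  have := hc i.succ
  have := (hstep i).2
  let D : Subgroup H := K ⊓ (c i.succ).comap φ
  let f : D →* ↥(c i.succ) ⧸ (c i.castSucc).subgroupOf (c i.succ) :=
    (QuotientGroup.mk' _).comp ((φ.comp D.subtype).codRestrict _ fun y => y.2.2)
  have hf : f.ker.map D.subtype ≤ N := by
    rintro _ ⟨y, hy, rfl⟩
    have hy' := (QuotientGroup.eq_one_iff _).mp (MonoidHom.mem_ker.mp hy)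
    exact hi ⟨y.2.1, mem_subgroupOf.mp hy'⟩
  obtain ⟨x, hxD, hx⟩ := exists_le_zpowers_sup_of_ker_le f hf
  refine ⟨x, hxD.1, fun hxN => hi' (hx.trans (sup_le (zpowers_le.mpr hxN) le_rfl)), ?_⟩
  have hsup : zpowers x ⊔ N = D ⊔ N :=
    le_antisymm (sup_le_sup_right (zpowers_le.mpr hxD) N) (sup_le hx le_sup_right)
  rw [hsup]
  infer_instance

theorem isCyclic_zpowers_sup_quotient {G : Type*} [Group G] (x : G) (N : Subgroup G) [N.Normal] :
    IsCyclic (↥(zpowers x ⊔ N) ⧸ N.subgroupOf (zpowers x ⊔ N)) :=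
  let e := QuotientGroup.quotientInfEquivProdNormalQuotient (zpowers x) N
  isCyclic_of_surjective (e.toMonoidHom.comp (QuotientGroup.mk' _))
    (e.surjective.comp (QuotientGroup.mk'_surjective _))

theorem isSupersoluble_of_forall_normal {G : Type*} [Group G] [Finite G]
    (h : ∀ N : Subgroup G, N.Normal → N ≠ ⊤ → ∃ x ∉ N, (zpowers x ⊔ N).Normal) :
    IsSupersoluble G := by
  suffices hseries : ∀ N : Subgroup G, N.Normal →
      ∃ (n : ℕ) (c : Fin (n + 1) → Subgroup G) (hc : ∀ i, (c i).Normal),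
        c 0 = N ∧ c (Fin.last n) = ⊤ ∧
        ∀ i : Fin n, c i.castSucc ≤ c i.succ ∧
          haveI := (hc i.castSucc).subgroupOf (c i.succ)
          IsCyclic (↥(c i.succ) ⧸ ((c i.castSucc).subgroupOf (c i.succ))) from
    hseries ⊥ inferInstance
  intro N hN
  induction N using WellFoundedGT.induction with
  | _ N ih =>
  obtain rfl | hNtop := eq_or_ne N ⊤
  · exact ⟨0, fun _ => ⊤, fun _ => hN, rfl, rfl, fun i => i.elim0⟩
  obtain ⟨x, hxN, hxnormal⟩ := h N hN hNtop
  have hlt : N < zpowers x ⊔ N :=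
    le_sup_right.lt_of_not_ge fun hle => hxN (hle (mem_sup_left (mem_zpowers x)))
  obtain ⟨n, c, hc, h0, hlast, hstep⟩ := ih _ hlt hxnormal
  refine ⟨n + 1, Fin.cons N c, Fin.cases hN hc, rfl, hlast, Fin.cases ?_ hstep⟩
  have hfirst : ∀ B : Subgroup G, B = zpowers x ⊔ N → N ≤ B ∧
      haveI := hN.subgroupOf B
      IsCyclic (↥B ⧸ N.subgroupOf B) := by
    rintro _ rfl
    exact ⟨hlt.le, isCyclic_zpowers_sup_quotient x N⟩
  exact hfirst _ h0

theorem isSupersoluble_of_surjective_of_forall_normal {G Q : Type*} [Group G] [Group Q] [Finite Q]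
    {ψ : G →* Q} (hψ : Function.Surjective ψ)
    (h : ∀ N : Subgroup G, N.Normal → ψ.ker ≤ N → N ≠ ⊤ → ∃ x ∉ N, (zpowers x ⊔ N).Normal) :
    IsSupersoluble Q := by
  refine isSupersoluble_of_forall_normal fun N hN hNtop => ?_
  obtain ⟨x, hxN, hx⟩ := h (N.comap ψ) (hN.comap ψ) (ker_le_comap ψ N) fun htop =>
    hNtop (by rw [← map_comap_eq_self_of_surjective hψ N, htop, map_top_of_surjective ψ hψ])
  refine ⟨ψ x, hxN, ?_⟩
  simpa only [Subgroup.map_sup, map_comap_eq_self_of_surjective hψ, MonoidHom.map_zpowers]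
    using hx.map ψ hψ

theorem IsSupersoluble.of_ker_le_ker {G H Q : Type*} [Group G] [Group H] [Group Q] [Finite Q]
    (hG : IsSupersoluble G) (φ : H →* G) {ψ : H →* Q} (hψ : Function.Surjective ψ)
    (hker : φ.ker ≤ ψ.ker) : IsSupersoluble Q := by
  refine isSupersoluble_of_surjective_of_forall_normal hψ fun N hN hψN hNtop => ?_
  obtain ⟨x, -, hx⟩ := hG.exists_normal_zpowers_sup φ (K := ⊤) (N := N) (by simpa using hNtop)
    (inf_le_right.trans (hker.trans hψN))
  exact ⟨x, hx⟩

theorem IsSupersoluble.of_surjective {G Q : Type*} [Group G] [Group Q] [Finite Q]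
    (hG : IsSupersoluble G) {ψ : G →* Q} (hψ : Function.Surjective ψ) : IsSupersoluble Q :=
  hG.of_ker_le_ker (MonoidHom.id G) hψ (by simp)

theorem IsSupersoluble.of_injective {G H : Type*} [Group G] [Group H] [Finite H]
    (hG : IsSupersoluble G) {φ : H →* G} (hφ : Function.Injective φ) : IsSupersoluble H :=
  hG.of_ker_le_ker φ (ψ := MonoidHom.id H) Function.surjective_id
    (by simp [(MonoidHom.ker_eq_bot_iff φ).mpr hφ])

theorem IsSupersoluble.quotient_mono {G : Type*} [Group G] [Finite G] {A B : Subgroup G}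
    [A.Normal] [B.Normal] (hA : IsSupersoluble (G ⧸ A)) (hAB : A ≤ B) : IsSupersoluble (G ⧸ B) :=
  hA.of_ker_le_ker (QuotientGroup.mk' A) (QuotientGroup.mk'_surjective B) (by simpa using hAB)

theorem IsSupersoluble.of_quotient_bot {G : Type*} [Group G] [Finite G]
    (h : IsSupersoluble (G ⧸ (⊥ : Subgroup G))) : IsSupersoluble G :=
  h.of_injective (φ := QuotientGroup.mk' ⊥)
    ((MonoidHom.ker_eq_bot_iff _).mp (QuotientGroup.ker_mk' ⊥))

theorem IsSupersoluble.quotient_inf {G : Type*} [Group G] [Finite G] {A B : Subgroup G}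
    [A.Normal] [B.Normal] (hA : IsSupersoluble (G ⧸ A)) (hB : IsSupersoluble (G ⧸ B)) :
    IsSupersoluble (G ⧸ A ⊓ B) := by
  refine isSupersoluble_of_surjective_of_forall_normal (QuotientGroup.mk'_surjective (A ⊓ B))
    fun N hN hABN hNtop => ?_
  rw [QuotientGroup.ker_mk'] at hABN
  by_cases hAN : A ≤ N
  · obtain ⟨x, -, hx⟩ := hA.exists_normal_zpowers_sup (QuotientGroup.mk' A) (K := ⊤) (N := N)
      (by simpa using hNtop) (by simpa using hAN)
    exact ⟨x, hx⟩
  · obtain ⟨x, -, hx⟩ := hB.exists_normal_zpowers_sup (QuotientGroup.mk' B) hAN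
      (by simpa using hABN)
    exact ⟨x, hx⟩

theorem IsSupersoluble.of_quotient_zpowers {G : Type*} [Group G] [Finite G] {x : G}
    [(zpowers x).Normal] (h : IsSupersoluble (G ⧸ zpowers x)) : IsSupersoluble G := by
  refine isSupersoluble_of_forall_normal fun N hN hNtop => ?_
  by_cases hxN : x ∈ N
  · obtain ⟨y, -, hy⟩ := h.exists_normal_zpowers_sup (QuotientGroup.mk' (zpowers x)) (K := ⊤)
      (N := N) (by simpa using hNtop) (by simpa using hxN)
    exact ⟨y, hy⟩
  · exact ⟨x, hxN, inferInstance⟩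

theorem isSupersoluble_of_subsingleton (G : Type*) [Group G] [Subsingleton G] : IsSupersoluble G :=
  isSupersoluble_of_forall_normal fun N _ hN => absurd (Subsingleton.elim N ⊤) hN

theorem isSupersoluble_quotient_of_isCoatom {G : Type*} [Group G] [Finite G] {M : Subgroup G}
    [M.Normal] (hM : IsCoatom M) : IsSupersoluble (G ⧸ M) := by
  refine isSupersoluble_of_surjective_of_forall_normal (QuotientGroup.mk'_surjective M)
    fun N _ hMN hNtop => ?_
  rw [QuotientGroup.ker_mk'] at hMN
  obtain ⟨x, hx⟩ : ∃ x, x ∉ N := by simpa [eq_top_iff'] using hNtop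
  have htop : zpowers x ⊔ N = ⊤ :=
    hM.2 _ (hMN.trans_lt
      (le_sup_right.lt_of_not_ge fun hle => hx (hle (mem_sup_left (mem_zpowers x)))))
  exact ⟨x, hx, htop ▸ inferInstance⟩

section Residual

variable {G : Type*} [Group G]

instance ssResidual_normal : (ssResidual G).Normal :=
  normal_iInf_normal fun _ => normal_iInf_normal fun hN => hN.1

theorem ssResidual_le {N : Subgroup G} [hN : N.Normal] (h : IsSupersoluble (G ⧸ N)) :
    ssResidual G ≤ N :=
  iInf₂_le N ⟨hN, h⟩

variable (G) in
theorem isSupersoluble_quotient_ssResidual [Finite G] : IsSupersoluble (G ⧸ ssResidual G) := by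
  have := QuotientGroup.subsingleton_quotient_top (G := G)
  obtain ⟨R, ⟨hR, hRss⟩, hRmin⟩ := exists_minimal_of_wellFoundedLT
    (fun N : Subgroup G => ∃ _ : N.Normal, IsSupersoluble (G ⧸ N))
    ⟨⊤, inferInstance, isSupersoluble_of_subsingleton _⟩
  have hle : R ≤ ssResidual G := le_iInf₂ fun N ⟨_, hN⟩ =>
    (hRmin ⟨inferInstance, hRss.quotient_inf hN⟩ inf_le_left).trans inf_le_right
  exact hRss.quotient_mono hle

end Residual

theorem ker_conjNormal {G : Type*} [Group G] (N : Subgroup G) [N.Normal] :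
    (MulAut.conjNormal : G →* MulAut N).ker = centralizer (N : Set G) := by
  ext g
  simp [MonoidHom.mem_ker, mem_centralizer_iff_commutator_eq_one', MulEquiv.ext_iff,
    Subtype.ext_iff, commutatorElement_def, mul_inv_eq_one]

/-- The subgroup `G'Gⁿ`: the smallest normal subgroup of `G` whose quotient is abelian of exponent
dividing `n`. For a prime `p`, the subgroup `G'Gᵖ⁻¹` centralizes every normal subgroup of order
`p`, whose automorphism group is cyclic of order `p - 1`. -/
def abelianExponentResidual (n : ℕ) (G : Type*) [Group G] : Subgroup G :=
  _root_.commutator G ⊔ closure (Set.range fun g : G => g ^ n)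

section AbelianExponentResidual

variable {G H : Type*} [Group G] [Group H] {n : ℕ}

theorem map_abelianExponentResidual_le (φ : G →* H) :
    (abelianExponentResidual n G).map φ ≤ abelianExponentResidual n H := by
  rw [abelianExponentResidual, Subgroup.map_sup, MonoidHom.map_closure]
  refine sup_le_sup ?_ (closure_mono ?_)
  · rw [commutator_def, map_commutator]
    exact commutator_mono le_top le_top
  · rintro _ ⟨_, ⟨g, rfl⟩, rfl⟩
    exact ⟨φ g, (map_pow φ g n).symm⟩

instance abelianExponentResidual_characteristic :
    (abelianExponentResidual n G).Characteristic :=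
  characteristic_iff_map_le.mpr fun φ => map_abelianExponentResidual_le φ.toMonoidHom

theorem pow_mem_abelianExponentResidual (g : G) : g ^ n ∈ abelianExponentResidual n G :=
  mem_sup_right (subset_closure ⟨g, rfl⟩)

theorem abelianExponentResidual_le_ker {A : Type*} [CommGroup A] (hA : ∀ a : A, a ^ n = 1)
    (φ : G →* A) : abelianExponentResidual n G ≤ φ.ker := by
  refine sup_le (Abelianization.commutator_subset_ker φ) ((closure_le _).mpr ?_)
  rintro _ ⟨g, rfl⟩
  exact (map_pow φ g n).trans (hA (φ g))

theorem abelianExponentResidual_le_centralizer_zpowers {x : G} [(zpowers x).Normal]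
    (hp : (orderOf x).Prime) :
    abelianExponentResidual (orderOf x - 1) G ≤ centralizer (zpowers x : Set G) := by
  have : Finite (zpowers x) := Nat.finite_of_card_ne_zero (by simpa using hp.ne_zero)
  let e := IsCyclic.mulAutMulEquiv (zpowers x)
  have hcard : Nat.card (ZMod (Nat.card (zpowers x)))ˣ = orderOf x - 1 := by
    rw [← Nat.card_congr e.toEquiv, IsCyclic.card_mulAut, Nat.card_zpowers, Nat.totient_prime hp]
  have hker := abelianExponentResidual_le_ker (fun u => hcard ▸ pow_card_eq_one')
    (e.toMonoidHom.comp (MulAut.conjNormal : G →* MulAut (zpowers x)))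
  rw [← ker_conjNormal]
  exact fun g hg => e.injective ((hker hg).trans (map_one e).symm)

end AbelianExponentResidual

theorem IsSupersoluble.exists_normal_zpowers_of_ne_bot {G : Type*} [Group G] [Finite G]
    (hG : IsSupersoluble G) {K : Subgroup G} [K.Normal] (hK : K ≠ ⊥) :
    ∃ x ∈ K, (zpowers x).Normal ∧ (orderOf x).Prime := by
  obtain ⟨x, hxK, hx, hnormal⟩ := hG.exists_normal_zpowers_sup (MonoidHom.id G) (K := K) (N := ⊥)
    (by simpa using hK) (by simp)
  rw [sup_bot_eq] at hnormal
  obtain ⟨p, hp, d, hd⟩ := Nat.exists_prime_and_dvd (n := orderOf x) (by simpa using hx)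
  have hd0 : d ≠ 0 := by
    rintro rfl
    exact (orderOf_pos x).ne' hd
  refine ⟨x ^ d, pow_mem hxK d, ⟨?_⟩, ?_⟩
  · rintro _ ⟨k, rfl⟩ g
    obtain ⟨j, hj : x ^ j = g * x * g⁻¹⟩ := hnormal.conj_mem x (mem_zpowers x) g
    refine ⟨j * k, ?_⟩
    simp only [← conj_zpow, ← hj, ← zpow_natCast, ← zpow_mul, mul_left_comm]
  · rwa [orderOf_pow_of_dvd hd0 ⟨p, by rw [hd, mul_comm]⟩, hd,
      Nat.mul_div_cancel _ (Nat.pos_of_ne_zero hd0)]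

section NormalComplement

variable {G : Type*} [Group G] [Finite G] {p : ℕ} [Fact p.Prime]

open scoped IsMulCommutative in
/- The transfer into `C` is `g ↦ g ^ C.index`, so its kernel consists of the elements whose order
divides `C.index`. -/
theorem exists_characteristic_of_le_center {C : Subgroup G} (hC : IsPGroup p C)
    (hcenter : C ≤ center G) (hindex : ¬p ∣ C.index) :
    ∃ K : Subgroup G, K.Characteristic ∧ ¬p ∣ Nat.card K ∧ ∀ g, ∃ k, g ^ p ^ k ∈ K := by
  have : IsMulCommutative C := ⟨⟨fun a b => Subtype.ext (mem_center_iff.mp (hcenter b.2) a)⟩⟩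
  let τ : G →* C := (MonoidHom.id C).transfer
  have hτ (g : G) : (τ g : G) = g ^ C.index :=
    congrArg Subtype.val (MonoidHom.transfer_eq_pow (MonoidHom.id C) g fun k g₀ h => by
      have hz := mem_center_iff.mp (hcenter h) g₀
      exact mul_right_cancel (hz.symm.trans (by group)))
  have hmem (g : G) : g ∈ τ.ker ↔ g ^ C.index = 1 := by
    rw [MonoidHom.mem_ker, ← hτ, OneMemClass.coe_eq_one]
  refine ⟨τ.ker, characteristic_iff_comap_le.mpr fun φ g hg => ?_, fun hp => ?_, fun g => ?_⟩
  · rw [mem_comap, hmem] at hg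
    rw [hmem]
    exact φ.injective (by simpa using hg)
  · obtain ⟨g, hg⟩ := exists_prime_orderOf_dvd_card' p hp
    refine hindex (hg ▸ orderOf_dvd_of_pow_eq_one (Subtype.ext ((hmem g).mp g.2)))
  · obtain ⟨k, hk⟩ := hC (τ g)
    exact ⟨k, MonoidHom.mem_ker.mpr ((map_pow τ g _).trans hk)⟩

theorem exists_normal_of_le_centralizer {C S : Subgroup G} [S.Normal] (hC : IsPGroup p C)
    (hcentral : S ≤ centralizer (C : Set G)) (hindex : ¬p ∣ C.relIndex S) :
    ∃ K : Subgroup G, K.Normal ∧ ¬p ∣ Nat.card K ∧ ∀ s ∈ S, ∃ k, s ^ p ^ k ∈ K := by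
  have hcenter : C.subgroupOf S ≤ center S := fun c hc =>
    mem_center_iff.mpr fun s => Subtype.ext (mem_centralizer_iff.mp (hcentral s.2) c hc).symm
  obtain ⟨K, hK, hcard, hpow⟩ := exists_characteristic_of_le_center
    (hC.comap_subtype) hcenter hindex
  refine ⟨K.map S.subtype, inferInstance, ?_, fun s hs => ?_⟩
  · rwa [card_map_of_injective S.subtype_injective]
  · obtain ⟨k, hk⟩ := hpow ⟨s, hs⟩
    exact ⟨k, _, hk, rfl⟩

end NormalComplement

section QuotientComap

variable {G : Type*} [Group G] {p : ℕ} {N : Subgroup G} [N.Normal]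
  {T : Subgroup (G ⧸ N)}

theorem not_dvd_relIndex_of_le_comap_mk (hT : ¬p ∣ Nat.card T) {S : Subgroup G}
    (hS : S ≤ T.comap (QuotientGroup.mk' N)) : ¬p ∣ N.relIndex S := by
  rw [← QuotientGroup.ker_mk' N, relIndex_ker]
  exact fun h => hT (h.trans (card_dvd_of_le (map_le_iff_le_comap.mpr hS)))

theorem not_dvd_card_comap_mk (hp : p.Prime) (hT : ¬p ∣ Nat.card T) (hN : ¬p ∣ Nat.card N) :
    ¬p ∣ Nat.card (T.comap (QuotientGroup.mk' N)) := by
  rw [← relIndex_bot_left, ← relIndex_mul_relIndex ⊥ N _ bot_le (QuotientGroup.le_comap_mk' N T),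
    relIndex_bot_left]
  exact hp.not_dvd_mul hN (not_dvd_relIndex_of_le_comap_mk hT le_rfl)

end QuotientComap

theorem IsSupersoluble.exists_normal_not_dvd_card {p : ℕ} [Fact p.Prime] {G : Type*} [Group G]
    [Finite G] (hG : IsSupersoluble G) :
    ∃ T : Subgroup G, T.Normal ∧ ¬p ∣ Nat.card T ∧
      ∀ a ∈ abelianExponentResidual (p - 1) G, ∃ k, a ^ p ^ k ∈ T := by
  have hp : p.Prime := Fact.out
  induction hn : Nat.card G using Nat.strong_induction_on generalizing G with
  | _ n ih =>
  obtain htriv | hnontriv := subsingleton_or_nontrivial G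
  · exact ⟨⊥, inferInstance, by simpa using hp.ne_one, fun a _ => ⟨0, Subsingleton.elim _ _⟩⟩
  obtain ⟨x, -, hx, hxp⟩ := hG.exists_normal_zpowers_of_ne_bot (K := ⊤) top_ne_bot
  let π := QuotientGroup.mk' (zpowers x)
  have hcard : Nat.card (G ⧸ zpowers x) < n := by
    rw [← hn, card_eq_card_quotient_mul_card_subgroup (zpowers x), Nat.card_zpowers]
    exact lt_mul_of_one_lt_right Nat.card_pos hxp.one_lt
  obtain ⟨T, hT, hTcard, hTpow⟩ :=
    ih _ hcard (hG.of_surjective (QuotientGroup.mk'_surjective (zpowers x))) rfl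
  have hpow : ∀ a ∈ abelianExponentResidual (p - 1) G, ∃ k, a ^ p ^ k ∈ T.comap π := fun a ha => by
    simpa using hTpow _ (map_abelianExponentResidual_le π (mem_map_of_mem π ha))
  obtain rfl | hpx := eq_or_ne p (orderOf x)
  · obtain ⟨K, hK, hKcard, hKpow⟩ := exists_normal_of_le_centralizer
      (C := zpowers x) (S := T.comap π ⊓ centralizer (zpowers x : Set G))
      (IsPGroup.of_card (n := 1) (by simp)) inf_le_right
      (not_dvd_relIndex_of_le_comap_mk hTcard inf_le_left)
    refine ⟨K, hK, hKcard, fun a ha => ?_⟩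
    obtain ⟨k, hk⟩ := hpow a ha
    obtain ⟨l, hl⟩ := hKpow _
      ⟨hk, pow_mem (abelianExponentResidual_le_centralizer_zpowers hxp ha) _⟩
    exact ⟨k + l, by rwa [pow_add, pow_mul]⟩
  · exact ⟨T.comap π, inferInstance,
      not_dvd_card_comap_mk hp hTcard (by simpa [Nat.prime_dvd_prime_iff_eq hp hxp] using hpx),
      hpow⟩

section MinimalNormal

variable {G : Type*} [Group G] {N : Subgroup G} [N.Normal]

theorem IsMinimalNormal.eq_bot_or_eq_top (hN : IsMinimalNormal N) {K : Subgroup N}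
    (hK : ∀ g : G, ∀ y ∈ K, MulAut.conjNormal g y ∈ K) : K = ⊥ ∨ K = ⊤ := by
  have hnormal : (K.map N.subtype).Normal := by
    refine ⟨?_⟩
    rintro _ ⟨y, hy, rfl⟩ g
    exact ⟨_, hK g y hy, MulAut.conjNormal_apply g y⟩
  refine or_iff_not_imp_left.mpr fun hne => ?_
  have hmap : K.map N.subtype = N := hN.2.2 _ hnormal (map_subtype_le K)
    (by rwa [Ne, map_eq_bot_iff_of_injective K N.subtype_injective])
  refine map_injective N.subtype_injective (hmap.trans ?_)
  rw [← MonoidHom.range_eq_map, range_subtype]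

theorem IsMinimalNormal.isMulCommutative (hN : IsMinimalNormal N) [Group.IsSolvable N] :
    IsMulCommutative N := by
  have : Nontrivial N := N.nontrivial_iff_ne_bot.mpr hN.2.1
  have hinv : ∀ g : G, ∀ y ∈ _root_.commutator N, MulAut.conjNormal g y ∈ _root_.commutator N :=
    fun g => characteristic_iff_le_comap.mp inferInstance (MulAut.conjNormal g)
  have hbot := (hN.eq_bot_or_eq_top hinv).resolve_right
    (Group.IsSolvable.commutator_lt_top_of_nontrivial N).ne
  rw [commutator_def, commutator_top_left_eq_bot_iff_le_center] at hbot
  exact ⟨⟨fun a b => mem_center_iff.mp (hbot (mem_top b)) a⟩⟩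

open scoped IsMulCommutative in
theorem IsMinimalNormal.exists_prime_forall_pow_eq_one [Finite N] [IsMulCommutative N]
    (hN : IsMinimalNormal N) : ∃ p : ℕ, p.Prime ∧ ∀ y : N, y ^ p = 1 := by
  have : Nontrivial N := N.nontrivial_iff_ne_bot.mpr hN.2.1
  obtain ⟨p, hp, hdvd⟩ := Nat.exists_prime_and_dvd (Finite.one_lt_card (α := N)).ne'
  have := Fact.mk hp
  obtain ⟨y, hy⟩ := exists_prime_orderOf_dvd_card' p hdvd
  have htop : (powMonoidHom p : N →* N).ker = ⊤ := by
    refine (hN.eq_bot_or_eq_top fun g z hz => ?_).resolve_left fun hbot => ?_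
    · rw [MonoidHom.mem_ker, powMonoidHom_apply] at hz ⊢
      rw [← map_pow, hz, map_one]
    · have hy1 : y ∈ (powMonoidHom p : N →* N).ker := hy ▸ pow_orderOf_eq_one y
      rw [hbot, mem_bot] at hy1
      exact hp.ne_one (by rw [← hy, hy1, orderOf_one])
  exact ⟨p, hp, fun z => (htop ▸ mem_top z : z ∈ (powMonoidHom p : N →* N).ker)⟩

theorem IsMinimalNormal.le_centralizer {p : ℕ} [Fact p.Prime] [Finite N] (hN : IsMinimalNormal N)
    (hNp : IsPGroup p N) {A : Subgroup G} [A.Normal] (hA : IsPGroup p A) :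
    N ≤ centralizer (A : Set G) := by
  have : Nontrivial N := N.nontrivial_iff_ne_bot.mpr hN.2.1
  let _ : MulAction A N := MulAction.compHom N ((MulAut.conjNormal (H := N)).comp A.subtype)
  have hdvd : p ∣ Nat.card N := by
    obtain ⟨k, hk, hcard⟩ := hNp.nontrivial_iff_card.mp this
    exact hcard ▸ dvd_pow_self p hk.ne'
  obtain ⟨y, hy, hy1⟩ := hA.exists_fixed_point_of_prime_dvd_card_of_fixed_point N hdvd (a := 1)
    fun a => map_one (MulAut.conjNormal (a : G))
  have hmem : y ∈ (centralizer (A : Set G)).subgroupOf N := fun a ha =>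
    mul_inv_eq_iff_eq_mul.mp (congrArg Subtype.val (hy ⟨a, ha⟩))
  refine subgroupOf_eq_top.mp ((hN.eq_bot_or_eq_top fun g z hz => ?_).resolve_left fun hbot => ?_)
  · rw [mem_subgroupOf] at hz ⊢
    exact (normal_centralizer (H := A)).conj_mem _ hz g
  · rw [hbot, mem_bot] at hmem
    exact hy1 hmem.symm

end MinimalNormal

theorem exists_hasEigenvalue_of_pow_card_sub_one_eq_one {K V : Type*} [Field K] [Fintype K]
    [AddCommGroup V] [Module K V] [FiniteDimensional K V] [Nontrivial V] {f : Module.End K V}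
    (hf : f ^ (Fintype.card K - 1) = 1) : ∃ μ, f.HasEigenvalue μ := by
  have haeval : Polynomial.aeval f (Polynomial.X ^ Fintype.card K - Polynomial.X :
      Polynomial K) = 0 := by
    rw [map_sub, map_pow, Polynomial.aeval_X, ← Nat.sub_add_cancel Fintype.one_lt_card.le, pow_succ,
      hf, one_mul, sub_self]
  have hsplits : (Polynomial.X ^ Fintype.card K - Polynomial.X : Polynomial K).Splits := by
    rw [Polynomial.splits_iff_card_roots, FiniteField.roots_X_pow_card_sub_X,
      FiniteField.X_pow_card_sub_X_natDegree_eq K Fintype.one_lt_card]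
    rfl
  have hminpoly : (minpoly K f).Splits := hsplits.of_dvd
    (FiniteField.X_pow_card_sub_X_ne_zero K Fintype.one_lt_card) (minpoly.dvd K f haeval)
  obtain ⟨μ, hμ⟩ := hminpoly.exists_eval_eq_zero
    (minpoly.degree_pos (Algebra.IsIntegral.isIntegral f)).ne'
  exact ⟨μ, Module.End.hasEigenvalue_of_isRoot hμ⟩

theorem exists_ne_zero_apply_eq_nsmul {p : ℕ} [Fact p.Prime] {V : Type*} [AddCommGroup V]
    [Module (ZMod p) V] [Finite V] [Nontrivial V] {f : V →+ V} (hf : f^[p - 1] = id) :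
    ∃ j : ℕ, ∃ v : V, v ≠ 0 ∧ f v = j • v := by
  have : Module.Finite (ZMod p) V := Module.Finite.of_finite
  let F : Module.End (ZMod p) V := f.toZModLinearMap p
  have hF : F ^ (Fintype.card (ZMod p) - 1) = 1 := by
    ext v
    rw [ZMod.card, Module.End.pow_apply]
    exact congrFun hf v
  obtain ⟨μ, hμ⟩ := exists_hasEigenvalue_of_pow_card_sub_one_eq_one hF
  obtain ⟨v, hv⟩ := hμ.exists_hasEigenvector
  refine ⟨μ.val, v, hv.2, ?_⟩
  rw [← Nat.cast_smul_eq_nsmul (ZMod p), ZMod.natCast_zmod_val]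
  exact hv.apply_eq_smul

theorem exists_ne_one_apply_eq_pow {p : ℕ} [Fact p.Prime] {A : Type*} [CommGroup A] [Finite A]
    [Nontrivial A] (hA : ∀ a : A, a ^ p = 1) {f : MulAut A} (hf : f ^ (p - 1) = 1) :
    ∃ j : ℕ, ∃ a : A, a ≠ 1 ∧ f a = a ^ j := by
  let _ : Module (ZMod p) (Additive A) := AddCommGroup.zmodModule hA
  have hiter : f^[p - 1] = id := by
    rw [← hom_coe_pow (fun g : MulAut A => ⇑g) rfl (fun _ _ => rfl), hf]
    rfl
  exact exists_ne_zero_apply_eq_nsmul (V := Additive A) (f := f.toMonoidHom.toAdditive) hiter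

section Cyclic

variable {G : Type*} [Group G] {N : Subgroup G} [N.Normal] [IsMulCommutative N] [Finite N] {p : ℕ}
  [Fact p.Prime]

open scoped IsMulCommutative in
theorem IsMinimalNormal.exists_forall_conjNormal_eq_pow (hN : IsMinimalNormal N)
    (hexp : ∀ y : N, y ^ p = 1)
    (hcent : abelianExponentResidual (p - 1) G ≤ centralizer (N : Set G)) (g : G) :
    ∃ j : ℕ, ∀ y : N, MulAut.conjNormal g y = y ^ j := by
  have : Nontrivial N := N.nontrivial_iff_ne_bot.mpr hN.2.1
  rw [← ker_conjNormal] at hcent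
  obtain ⟨j, v, hv, hgv⟩ := exists_ne_one_apply_eq_pow hexp (f := MulAut.conjNormal g)
    ((map_pow _ g _).symm.trans (hcent (pow_mem_abelianExponentResidual g)))
  let E : Subgroup N := (MulAut.conjNormal g).toMonoidHom.eqLocus (powMonoidHom j)
  have hE (h : G) (y : N) (hy : y ∈ E) : MulAut.conjNormal h y ∈ E := by
    have hcomm : Commute (MulAut.conjNormal (H := N) g) (MulAut.conjNormal h) := by
      rw [← commutatorElement_eq_one_iff_commute, ← map_commutatorElement]
      exact hcent (mem_sup_left (commutator_mem_commutator (mem_top g) (mem_top h)))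
    calc MulAut.conjNormal g (MulAut.conjNormal h y)
        = MulAut.conjNormal h (MulAut.conjNormal g y) := DFunLike.congr_fun hcomm.eq y
      _ = MulAut.conjNormal h (y ^ j) := congrArg _ hy
      _ = MulAut.conjNormal h y ^ j := map_pow _ y j
  have htop : E = ⊤ := (hN.eq_bot_or_eq_top hE).resolve_left fun hbot =>
    hv (mem_bot.mp (hbot ▸ (hgv : v ∈ E)))
  exact ⟨j, fun y => (htop ▸ mem_top y : y ∈ E)⟩

theorem IsMinimalNormal.exists_eq_zpowers (hN : IsMinimalNormal N) (hexp : ∀ y : N, y ^ p = 1)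
    (hcent : abelianExponentResidual (p - 1) G ≤ centralizer (N : Set G)) :
    ∃ x, N = zpowers x := by
  have : Nontrivial N := N.nontrivial_iff_ne_bot.mpr hN.2.1
  obtain ⟨x, hx⟩ := exists_ne (1 : N)
  have htop : zpowers x = ⊤ := by
    refine (hN.eq_bot_or_eq_top fun g y hy => ?_).resolve_left (zpowers_ne_bot.mpr hx)
    obtain ⟨j, hj⟩ := hN.exists_forall_conjNormal_eq_pow hexp hcent g
    exact hj y ▸ pow_mem hy j
  refine ⟨x, ?_⟩
  rw [← N.subtype_apply, ← MonoidHom.map_zpowers, htop, ← MonoidHom.range_eq_map, range_subtype]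

end Cyclic

section Frattini

variable {G : Type*} [Group G] [Finite G]

theorem exists_isMinimalNormal_le {K : Subgroup G} [K.Normal] (hK : K ≠ ⊥) :
    ∃ N ≤ K, IsMinimalNormal N := by
  obtain ⟨N, ⟨hN, hNK, hNbot⟩, hmin⟩ := exists_minimal_of_wellFoundedLT
    (fun N : Subgroup G => N.Normal ∧ N ≤ K ∧ N ≠ ⊥) ⟨K, inferInstance, le_rfl, hK⟩
  exact ⟨N, hNK, hN, hNbot, fun M hM hMN hMbot =>
    hMN.antisymm (hmin ⟨hM, hMN.trans hNK, hMbot⟩ hMN)⟩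

theorem exists_normal_isPGroup_map_mk_eq {q : ℕ} [Fact q.Prime] {N : Subgroup G} [N.Normal]
    (hN : N ≤ frattini G) {L : Subgroup (G ⧸ N)} [L.Normal] (hL : IsPGroup q L) :
    ∃ Q : Subgroup G, Q.Normal ∧ IsPGroup q Q ∧ Q.map (QuotientGroup.mk' N) = L := by
  let π := QuotientGroup.mk' N
  let E : Subgroup G := L.comap π
  obtain ⟨P⟩ : Nonempty (Sylow q E) := inferInstance
  let Q : Subgroup G := (P : Subgroup E).map E.subtype
  have hπ : Function.Surjective (π.subgroupComap L) :=
    π.subgroupComap_surjective_of_surjective L (QuotientGroup.mk'_surjective N)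
  have hP : (P : Subgroup E).map (π.subgroupComap L) = ⊤ :=
    ((P.mapSurjective hπ).is_maximal' (hL.to_subgroup ⊤) le_top).symm
  have hQL : Q.map π = L := by
    have := congrArg (Subgroup.map L.subtype) hP
    rw [map_map, ← MonoidHom.range_eq_map, range_subtype] at this
    rw [← this, map_map]
    rfl
  have hE : E = Q ⊔ N := by
    rw [← QuotientGroup.ker_mk' N, ← comap_map_eq, hQL]
  have hnormalizer : normalizer (Q : Set G) = ⊤ := by
    refine frattini_nongenerating (top_le_iff.mp ?_)
    rw [← Sylow.normalizer_sup_eq_top P]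
    exact sup_le le_sup_left
      (hE.trans_le (sup_le_sup le_normalizer hN))
  exact ⟨Q, normalizer_eq_top_iff.mp hnormalizer, P.isPGroup'.map _, hQL⟩

theorem IsMinimalNormal.isSupersoluble_of_isPGroup {p : ℕ} [Fact p.Prime] {R : Subgroup G}
    [R.Normal] [IsMulCommutative R] (hR : IsMinimalNormal R) (hexp : ∀ y : R, y ^ p = 1)
    (hA : IsPGroup p (abelianExponentResidual (p - 1) (G ⧸ R))) (hGR : IsSupersoluble (G ⧸ R)) :
    IsSupersoluble G := by
  have hRp : IsPGroup p R := fun y => ⟨1, by rw [pow_one, hexp]⟩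
  have hAG : IsPGroup p (abelianExponentResidual (p - 1) G) :=
    (hA.comap_of_ker_isPGroup (QuotientGroup.mk' R) (by rwa [QuotientGroup.ker_mk'])).to_le
      (map_le_iff_le_comap.mp (map_abelianExponentResidual_le _))
  obtain ⟨x, rfl⟩ := hR.exists_eq_zpowers hexp (le_centralizer_iff.mp (hR.le_centralizer hRp hAG))
  exact hGR.of_quotient_zpowers

theorem isSupersoluble_of_forall_quotient_of_frattini_ne_bot (hbot : frattini G ≠ ⊥)
    (hquot : ∀ (L : Subgroup G) [L.Normal], L ≠ ⊥ → IsSupersoluble (G ⧸ L)) :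
    IsSupersoluble G := by
  obtain ⟨R, hR, hmin⟩ := exists_isMinimalNormal_le hbot
  have := hmin.1
  have : Group.IsNilpotent (frattini G) := frattini_nilpotent
  have : Group.IsSolvable R :=
    Group.isSolvable_of_isSolvable_injective (Subgroup.inclusion_injective hR)
  have := hmin.isMulCommutative
  obtain ⟨p, hp, hexp⟩ := hmin.exists_prime_forall_pow_eq_one
  have := Fact.mk hp
  have hRp : IsPGroup p R := fun y => ⟨1, by rw [pow_one, hexp]⟩
  have hGR := hquot R hmin.2.1
  obtain ⟨T, hT, hTcard, hTpow⟩ := hGR.exists_normal_not_dvd_card (p := p)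
  obtain rfl | hTbot := eq_or_ne T ⊥
  · refine hmin.isSupersoluble_of_isPGroup hexp (fun a => ?_) hGR
    obtain ⟨k, hk⟩ := hTpow a a.2
    exact ⟨k, Subtype.ext (mem_bot.mp hk)⟩
  · obtain ⟨x, hxT, hx, hxq⟩ := hGR.exists_normal_zpowers_of_ne_bot hTbot
    have := Fact.mk hxq
    have hne : orderOf x ≠ p := by
      rintro rfl
      exact hTcard (Nat.card_zpowers x ▸ card_dvd_of_le (zpowers_le.mpr hxT))
    obtain ⟨Q, hQ, hQq, hQx⟩ := exists_normal_isPGroup_map_mk_eq hR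
      (IsPGroup.of_card (n := 1) (by simp) : IsPGroup (orderOf x) (zpowers x))
    have hQbot : Q ≠ ⊥ := by
      rintro rfl
      rw [Subgroup.map_bot, eq_comm, zpowers_eq_bot] at hQx
      exact hxq.ne_one (orderOf_eq_one_iff.mpr hQx)
    have hQR : Q ⊓ R = ⊥ := (IsPGroup.disjoint_of_ne _ _ hne Q R hQq hRp).eq_bot
    exact (((hquot Q hQbot).quotient_inf hGR).quotient_mono hQR.le).of_quotient_bot

theorem isSupersoluble_of_quotient_frattini (hG : IsSupersoluble (G ⧸ frattini G)) :
    IsSupersoluble G := by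
  induction hn : Nat.card G using Nat.strong_induction_on generalizing G with
  | _ n ih =>
  by_cases hbot : frattini G = ⊥
  · exact (hG.quotient_mono hbot.le).of_quotient_bot
  refine isSupersoluble_of_forall_quotient_of_frattini_ne_bot hbot fun L _ hL => ?_
  have hcard : Nat.card (G ⧸ L) < n := by
    rw [← hn, card_eq_card_quotient_mul_card_subgroup L]
    exact lt_mul_of_one_lt_right Nat.card_pos (L.one_lt_card_iff_ne_bot.mpr hL)
  let ψ := (QuotientGroup.mk' (frattini (G ⧸ L))).comp (QuotientGroup.mk' L)
  have hψ : Function.Surjective ψ :=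
    (QuotientGroup.mk'_surjective _).comp (QuotientGroup.mk'_surjective L)
  have hker : (QuotientGroup.mk' (frattini G)).ker ≤ ψ.ker := by
    rw [← MonoidHom.comap_ker, QuotientGroup.ker_mk', QuotientGroup.ker_mk']
    exact frattini_le_comap_frattini_of_surjective (QuotientGroup.mk'_surjective L)
  exact ih _ hcard (hG.of_ker_le_ker _ hψ hker) rfl

theorem isSupersoluble_of_forall_isCoatom
    (h : ∀ M : Subgroup G, IsCoatom M → IsSupersoluble (G ⧸ M.normalCore)) : IsSupersoluble G :=
  isSupersoluble_of_quotient_frattini <| (isSupersoluble_quotient_ssResidual G).quotient_mono <|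
    le_iInf₂ fun M hM => (ssResidual_le (h M hM)).trans M.normalCore_le

end Frattini

section MaximalSubgroup

variable {G : Type*} [Group G] {H K L M : Subgroup G}

theorem isMaximalIn_map_subtype {M : Subgroup H} (hM : IsCoatom M) :
    IsMaximalIn (M.map H.subtype) H := by
  refine ⟨map_subtype_le M, ?_⟩
  rwa [subgroupOf, comap_map_eq_self_of_injective H.subtype_injective]

theorem IsMaximalIn.not_le (hM : IsMaximalIn M H) : ¬H ≤ M := fun h =>
  hM.2.1 (subgroupOf_eq_top.mpr h)

theorem IsMaximalIn.subgroupOf_eq (hM : IsMaximalIn M H) (hMK : M ≤ K) (hHK : ¬H ≤ K) :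
    K.subgroupOf H = M.subgroupOf H :=
  (hM.2.le_iff.mp (comap_mono hMK)).resolve_left fun h => hHK (subgroupOf_eq_top.mp h)

theorem IsKUSubnormalIn.exists_step (hM : IsKUSubnormalIn M L) (hHL : H ≤ L) (hHM : ¬H ≤ M) :
    ∃ A B : Subgroup G, M ≤ A ∧ ¬H ≤ A ∧ H ≤ B ∧
      ((A.subgroupOf B).Normal ∨ IsSupersoluble (B ⧸ (A.subgroupOf B).normalCore)) := by
  obtain ⟨n, c, rfl, rfl, hstep⟩ := hM
  obtain ⟨i, hi, hi'⟩ := exists_castSucc_and_not_succ (P := fun i => ¬H ≤ c i) hHM (not_not.mpr hHL)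
  have hmono : Monotone c := Fin.monotone_iff_le_succ.mpr fun i => (hstep i).1
  exact ⟨_, _, hmono (Fin.zero_le _), hi, not_not.mp hi', (hstep i).2⟩

theorem IsSupersoluble.quotient_normalCore_subgroupOf [Finite H] {A B : Subgroup G} (hHB : H ≤ B)
    (h : IsSupersoluble (B ⧸ (A.subgroupOf B).normalCore)) :
    IsSupersoluble (H ⧸ (A.subgroupOf H).normalCore) := by
  let φ := (QuotientGroup.mk' (A.subgroupOf B).normalCore).comp (Subgroup.inclusion hHB)
  have hφ : φ.ker ≤ A.subgroupOf H := fun y hy =>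
    normalCore_le (A.subgroupOf B) ((QuotientGroup.eq_one_iff (Subgroup.inclusion hHB y)).mp hy)
  refine h.of_ker_le_ker φ (QuotientGroup.mk'_surjective _) ?_
  rw [QuotientGroup.ker_mk']
  exact normal_le_normalCore.mpr hφ

theorem IsMaximalIn.isSupersoluble_quotient_normalCore [Finite H] (hM : IsMaximalIn M H)
    (hMG : IsKUSubnormal M) : IsSupersoluble (H ⧸ (M.subgroupOf H).normalCore) := by
  obtain ⟨A, B, hMA, hHA, hHB, hnormal | hss⟩ := hMG.exists_step le_top hM.not_le
  · have : (A.subgroupOf H).Normal := hnormal.comap (Subgroup.inclusion hHB)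
    rw [hM.subgroupOf_eq hMA hHA] at this
    exact (isSupersoluble_quotient_of_isCoatom hM.2).quotient_mono
      (M.subgroupOf H).normalCore_eq_self.ge
  · rw [← hM.subgroupOf_eq hMA hHA]
    exact hss.quotient_normalCore_subgroupOf hHB

theorem nmaximal_supersoluble_of_KUsubnormal_general [Finite H]
    (h : ∀ M : Subgroup G, IsMaximalIn M H → IsKUSubnormal M) : IsSupersoluble H := by
  refine isSupersoluble_of_forall_isCoatom fun M hM => ?_
  have hmax := isMaximalIn_map_subtype hM
  have hMH : (M.map H.subtype).subgroupOf H = M :=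
    comap_map_eq_self_of_injective H.subtype_injective M
  have hss := hmax.isSupersoluble_quotient_normalCore (h _ hmax)
  rwa [hMH] at hss

end MaximalSubgroup

/-- If every `(n+1)`-maximal subgroup of `G` is `K`-`𝔘`-subnormal in `G`, then every
`n`-maximal subgroup of `G` is supersoluble. -/
theorem nmaximal_supersoluble_of_KUsubnormal (G : Type*) [Group G] [Finite G] (n : ℕ)
    (h : ∀ H : Subgroup G, IsNMaximal (n + 1) H → IsKUSubnormal H) :
    ∀ H : Subgroup G, IsNMaximal n H → IsSupersoluble H :=
  fun H hH => nmaximal_supersoluble_of_KUsubnormal_general fun M hM => h M ⟨H, hH, hM⟩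
end

section
/- If every 3-maximal subgroup of a finite group G is K-𝔘-subnormal in G, then G is soluble. -/
open Subgroup

/-!
All that matters about supersoluble groups is that they are soluble, so supersoluble steps are
weakened to soluble ones. Then, by induction on `n`, for `n = 1, 2, 3` a finite group `G` is
soluble as soon as all its `n`-maximal subgroups are subnormal in this weaker sense.

If `n = 1`, every maximal subgroup contains a term of the derived series, hence some term of the
derived series lies in the Frattini subgroup, which is nilpotent.

If `n > 1`, the maximal subgroups of `G` are soluble by induction. Suppose that `G` is not. A proper
subgroup cannot contain a term of the derived series, so every `n`-maximal subgroup lies in a proper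
normal subgroup, hence in the soluble radical `R`. Therefore the subgroup lattice of `G ⧸ R` has
length at most `n ≤ 3`, and such a group is soluble: otherwise it may be taken simple, and its Sylow
subgroup `P` for the smallest prime divisor `p` of the order is not cyclic by Burnside's transfer
theorem. Since `P` and its normalizer are proper, the bound on the length forces `P` to have order
`p ^ 2` and to be its own normalizer; so `P` is abelian and central in its normalizer, which
contradicts Burnside's theorem again.
-/

section Solvability

variable {G G' : Type*} [Group G] [Group G']

theorem derivedSeries_le_comap {f : G' →* G} {H : Subgroup G} {n : ℕ}
    (h : derivedSeries G n ≤ H) : derivedSeries G' n ≤ H.comap f :=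
  map_le_iff_le_comap.1 ((map_derivedSeries_le_derivedSeries f n).trans h)

theorem isSolvable_quotient_iff_exists_derivedSeries_le {N : Subgroup G} [N.Normal] :
    Group.IsSolvable (G ⧸ N) ↔ ∃ n, derivedSeries G n ≤ N := by
  rw [Group.isSolvable_def]
  refine exists_congr fun n => ?_
  rw [← map_derivedSeries_eq (QuotientGroup.mk'_surjective N), Subgroup.map_eq_bot_iff,
    QuotientGroup.ker_mk']

theorem isSolvable_quotient_normalCore_iff {H : Subgroup G} :
    Group.IsSolvable (G ⧸ H.normalCore) ↔ ∃ n, derivedSeries G n ≤ H := by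
  simp only [isSolvable_quotient_iff_exists_derivedSeries_le, normal_le_normalCore]

theorem isSolvable_of_derivedSeries_le {H : Subgroup G} [Group.IsSolvable H] {n : ℕ}
    (h : derivedSeries G n ≤ H) : Group.IsSolvable G :=
  have : Group.IsSolvable (G ⧸ derivedSeries G n) :=
    isSolvable_quotient_iff_exists_derivedSeries_le.2 ⟨n, le_rfl⟩
  Group.isSolvable_of_ker_le_range H.subtype (QuotientGroup.mk' (derivedSeries G n))
    (by rwa [QuotientGroup.ker_mk', range_subtype])

theorem isSolvable_of_le {H K : Subgroup G} (h : H ≤ K) [Group.IsSolvable K] :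
    Group.IsSolvable H :=
  Group.isSolvable_of_isSolvable_injective (inclusion_injective h)

theorem isSolvable_of_isSolvable_quotient_subgroupOf {H K : Subgroup G} (h : H ≤ K)
    [Group.IsSolvable H] [(H.subgroupOf K).Normal] [Group.IsSolvable (K ⧸ H.subgroupOf K)] :
    Group.IsSolvable K :=
  have : Group.IsSolvable (H.subgroupOf K) :=
    Group.isSolvable_of_isSolvable_injective (f := (subgroupOfEquivOfLe h).toMonoidHom)
      (subgroupOfEquivOfLe h).injective
  (Group.isSolvable_iff_subgroup_quotient (H.subgroupOf K)).2 ⟨this, inferInstance⟩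

theorem isSolvable_sup (H N : Subgroup G) [N.Normal] [Group.IsSolvable H] [Group.IsSolvable N] :
    Group.IsSolvable ↥(H ⊔ N) :=
  have : Group.IsSolvable (↥(H ⊔ N) ⧸ N.subgroupOf (H ⊔ N)) :=
    Group.isSolvable_of_surjective
      (f := (QuotientGroup.quotientInfEquivProdNormalQuotient H N).toMonoidHom)
      (QuotientGroup.quotientInfEquivProdNormalQuotient H N).surjective
  isSolvable_of_isSolvable_quotient_subgroupOf le_sup_right

theorem exists_isGreatest_normal_isSolvable (G : Type*) [Group G] [Finite G] :
    ∃ R : Subgroup G, IsGreatest {N : Subgroup G | N.Normal ∧ Group.IsSolvable N} R := by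
  obtain ⟨R, ⟨hRn, hRs⟩, hR⟩ := (Set.toFinite {N : Subgroup G | N.Normal ∧ Group.IsSolvable N})
    |>.exists_maximal ⟨⊥, normal_bot, inferInstance⟩
  refine ⟨R, ⟨hRn, hRs⟩, fun N ⟨hNn, hNs⟩ => ?_⟩
  exact le_sup_right.trans (hR ⟨inferInstance, isSolvable_sup R N⟩ le_sup_left)

theorem isSolvable_of_forall_isCoatom_derivedSeries_le [Finite G]
    (h : ∀ M : Subgroup G, IsCoatom M → ∃ n, derivedSeries G n ≤ M) : Group.IsSolvable G := by
  obtain ⟨n, hn⟩ : ∃ n, ∀ m, derivedSeries G n ≤ derivedSeries G m := by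
    obtain ⟨_, ⟨n, rfl⟩, hn⟩ :=
      (Set.toFinite (Set.range (derivedSeries G))).exists_minimal (Set.range_nonempty _)
    refine ⟨n, fun m => ?_⟩
    exact (hn ⟨max n m, rfl⟩ (derivedSeries_antitone G (le_max_left n m))).trans
      (derivedSeries_antitone G (le_max_right n m))
  have hfrattini : derivedSeries G n ≤ frattini G :=
    le_iInf₂ fun M hM => let ⟨m, hm⟩ := h M hM; (hn m).trans hm
  have : Group.IsNilpotent (frattini G) := frattini_nilpotent
  exact isSolvable_of_derivedSeries_le hfrattini

theorem IsSupersoluble.isSolvable (h : IsSupersoluble G) : Group.IsSolvable G := by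
  obtain ⟨n, c, hc, hbot, htop, hstep⟩ := h
  have hterm : ∀ i, Group.IsSolvable (c i) := by
    refine Fin.induction (hbot ▸ inferInstance) fun i _ => ?_
    have := (hc i.castSucc).subgroupOf (c i.succ)
    have : IsCyclic (c i.succ ⧸ (c i.castSucc).subgroupOf (c i.succ)) := (hstep i).2
    have : Group.IsSolvable (c i.succ ⧸ (c i.castSucc).subgroupOf (c i.succ)) :=
      Group.isSolvable_of_comm IsCyclic.isMulCommutative.is_comm.comm
    exact isSolvable_of_isSolvable_quotient_subgroupOf (hstep i).1
  have := hterm (Fin.last n)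
  exact isSolvable_of_derivedSeries_le (n := 0) htop.ge

end Solvability

section SubgroupLength

variable {G : Type*} [Group G]

theorem krullDim_subgroup_quotient (N : Subgroup G) [N.Normal] :
    Order.krullDim (Subgroup (G ⧸ N)) = Order.coheight N :=
  (Order.krullDim_eq_of_orderIso (QuotientGroup.comapMk'OrderIso N)).trans
    (Order.coheight_eq_krullDim_Ici N).symm

theorem krullDim_subgroup_subgroup (H : Subgroup G) :
    Order.krullDim (Subgroup H) = Order.height H :=
  (Order.krullDim_eq_of_orderIso (MapSubtype.orderIso H)).trans
    (Order.height_eq_krullDim_Iic H).symm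

theorem le_height_of_pow_dvd_card [Finite G] {p : ℕ} [Fact p.Prime] {n : ℕ} {H : Subgroup G}
    (h : p ^ n ∣ Nat.card H) : n ≤ Order.height H := by
  induction n generalizing H with
  | zero => exact zero_le
  | succ n ih =>
    obtain ⟨K, hK⟩ :=
      Sylow.exists_subgroup_card_pow_prime p ((pow_dvd_pow p n.le_succ).trans h)
    have hcard : Nat.card (K.map H.subtype) = p ^ n := by
      rw [card_map_of_injective H.subtype_injective, hK]
    have hlt : K.map H.subtype < H := by
      refine (map_subtype_le K).lt_of_ne fun heq => ?_
      rw [← heq, hcard] at h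
      exact (Nat.pow_lt_pow_succ (Fact.out : p.Prime).one_lt).not_ge
        (Nat.le_of_dvd (pow_pos (Fact.out : p.Prime).pos n) h)
    calc ((n + 1 : ℕ) : ℕ∞) = n + 1 := Nat.cast_succ n
      _ ≤ Order.height (K.map H.subtype) + 1 := by gcongr; exact ih hcard.symm.dvd
      _ ≤ Order.height H := Order.height_add_one_le hlt

theorem isSolvable_of_sylow_eq_top [Finite G] {p : ℕ} [Fact p.Prime] {P : Sylow p G}
    (h : (P : Subgroup G) = ⊤) : Group.IsSolvable G :=
  have : Group.IsNilpotent P := P.2.isNilpotent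
  isSolvable_of_derivedSeries_le (n := 0) h.ge

theorem not_normalizer_le_centralizer_of_sylow_ne_bot [Finite G] [IsSimpleGroup G]
    (hG : ¬ Group.IsSolvable G) {p : ℕ} [Fact p.Prime] {P : Sylow p G}
    (hP : (P : Subgroup G) ≠ ⊥) : ¬ normalizer (P : Set G) ≤ centralizer (P : Set G) := by
  intro hle
  have hcompl := MonoidHom.ker_transferSylow_isComplement' P hle
  rcases (MonoidHom.normal_ker (MonoidHom.transferSylow P hle)).eq_bot_or_eq_top with hker | hker
  · exact hG (isSolvable_of_sylow_eq_top (isComplement'_bot_left.1 (hker ▸ hcompl)))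
  · exact hP (isComplement'_top_left.1 (hker ▸ hcompl))

theorem sq_minFac_dvd_card_sylow [Finite G] [IsSimpleGroup G] (hG : ¬ Group.IsSolvable G)
    (P : Sylow (Nat.card G).minFac G) : (Nat.card G).minFac ^ 2 ∣ Nat.card P := by
  have := Fact.mk (Nat.minFac_prime (Finite.one_lt_card (α := G)).ne')
  have hbot : (P : Subgroup G) ≠ ⊥ := P.ne_bot_of_dvd_card (Nat.minFac_dvd _)
  obtain ⟨k, hk⟩ := P.2.exists_card_eq
  rw [hk]
  refine pow_dvd_pow _ ?_
  by_contra! hlt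
  have : IsCyclic P := by
    interval_cases k
    · exact absurd (eq_bot_of_card_eq _ (hk.trans (pow_zero _))) hbot
    · exact isCyclic_of_prime_card (hk.trans (pow_one _))
  exact not_normalizer_le_centralizer_of_sylow_ne_bot hG hbot (this.normalizer_le_centralizer rfl)

theorem isSolvable_of_isSimpleGroup_of_krullDim_subgroup_le_three [Finite G] [IsSimpleGroup G]
    (h : Order.krullDim (Subgroup G) ≤ 3) : Group.IsSolvable G := by
  by_contra hG
  have := Fact.mk (Nat.minFac_prime (Finite.one_lt_card (α := G)).ne')
  obtain ⟨P⟩ : Nonempty (Sylow (Nat.card G).minFac G) := inferInstance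
  have hbot : (P : Subgroup G) ≠ ⊥ := P.ne_bot_of_dvd_card (Nat.minFac_dvd _)
  have htop : (P : Subgroup G) ≠ ⊤ := mt isSolvable_of_sylow_eq_top hG
  have hsq := sq_minFac_dvd_card_sylow hG P
  have height_lt_three {H : Subgroup G} (hH : H < ⊤) : Order.height H + 1 ≤ 3 := by
    rw [← Order.height_top_eq_krullDim] at h
    exact (Order.height_add_one_le hH).trans (WithBot.coe_le_coe.1 h)
  have hcard : Nat.card P = (Nat.card G).minFac ^ 2 := by
    obtain ⟨k, hk⟩ := P.2.exists_card_eq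
    have hk_le : (k : ℕ∞) + 1 ≤ 3 :=
      (add_le_add_left (le_height_of_pow_dvd_card hk.symm.dvd) 1).trans
        (height_lt_three htop.lt_top)
    norm_cast at hk_le
    rw [hk]
    exact (pow_dvd_pow _ (by lia : k ≤ 2)).antisymm (hk ▸ hsq)
  have hcentral : (P : Subgroup G) ≤ centralizer P := by
    have := IsPGroup.isMulCommutative_of_card_eq_prime_sq hcard
    exact le_centralizer (P : Subgroup G)
  have hlt : (P : Subgroup G) < normalizer (P : Set G) := le_normalizer.lt_of_ne fun heq =>
    not_normalizer_le_centralizer_of_sylow_ne_bot hG hbot (heq ▸ hcentral)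
  have hnormalizer : normalizer (P : Set G) < ⊤ := lt_top_iff_ne_top.2 fun heq =>
    (normalizer_eq_top_iff.1 heq).eq_bot_or_eq_top.elim hbot htop
  have hlength : (2 : ℕ) + 1 + 1 ≤ (3 : ℕ∞) :=
    calc ((2 : ℕ) : ℕ∞) + 1 + 1 ≤ Order.height (P : Subgroup G) + 1 + 1 := by
          gcongr; exact le_height_of_pow_dvd_card hsq
      _ ≤ Order.height (normalizer (P : Set G)) + 1 := by
          gcongr; exact Order.height_add_one_le hlt
      _ ≤ 3 := height_lt_three hnormalizer
  norm_cast at hlength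

theorem isSolvable_of_krullDim_subgroup_le_three [Finite G]
    (h : Order.krullDim (Subgroup G) ≤ 3) : Group.IsSolvable G := by
  induction hcard : Nat.card G using Nat.strong_induction_on generalizing G with
  | _ n ih =>
  subst hcard
  cases subsingleton_or_nontrivial G
  · infer_instance
  by_cases hsimple : IsSimpleGroup G
  · exact isSolvable_of_isSimpleGroup_of_krullDim_subgroup_le_three h
  obtain ⟨N, hN, hbot, htop⟩ : ∃ N : Subgroup G, N.Normal ∧ N ≠ ⊥ ∧ N ≠ ⊤ := by
    contrapose! hsimple
    exact ⟨fun N hN => or_iff_not_imp_left.2 (hsimple N hN)⟩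
  have hsubgroup : Nat.card N < Nat.card G :=
    N.card_le_card_group.lt_of_ne (mt N.card_eq_iff_eq_top.1 htop)
  have hquotient : Nat.card (G ⧸ N) < Nat.card G := by
    rw [N.card_eq_card_quotient_mul_card_subgroup]
    exact lt_mul_of_one_lt_right Nat.card_pos (N.one_lt_card_iff_ne_bot.2 hbot)
  refine (Group.isSolvable_iff_subgroup_quotient N).2
    ⟨ih _ hsubgroup ?_ rfl, ih _ hquotient ?_ rfl⟩
  · exact krullDim_subgroup_subgroup N ▸ (Order.height_le_krullDim N).trans h
  · exact krullDim_subgroup_quotient N ▸ (Order.coheight_le_krullDim N).trans h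

end SubgroupLength

section MaximalSubgroups

variable {G : Type*} [Group G] {H K M R : Subgroup G} {m n : ℕ}

theorem isMaximalIn_iff_covBy : IsMaximalIn H K ↔ H ⋖ K := by
  have hcoatom (hle : H ≤ K) : IsCoatom (H.subgroupOf K) ↔ H ⋖ K :=
    let e : Subgroup K ≃o Set.Iic K := MapSubtype.orderIso K
    (e.symm.isCoatom_iff ⟨H, hle⟩).trans (covBy_iff_coatom_Iic hle).symm
  exact ⟨fun h => (hcoatom h.1).1 h.2, fun h => ⟨h.le, (hcoatom h.le).2 h⟩⟩

theorem map_subtype_covBy_map_subtype {H K : Subgroup M} (h : H ⋖ K) :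
    H.map M.subtype ⋖ K.map M.subtype := by
  refine (Set.OrdConnected.apply_covBy_apply_iff
    (OrderEmbedding.ofMapLEIff (map M.subtype) fun _ _ => map_subtype_le_map_subtype) ?_).2 h
  refine ⟨?_⟩
  rintro _ - _ ⟨K', rfl⟩ L ⟨-, hL⟩
  exact ⟨L.subgroupOf M, map_subgroupOf_eq_of_le (hL.trans (map_subtype_le K'))⟩

theorem isNMaximal_one_iff : IsNMaximal 1 M ↔ IsCoatom M := by
  simp only [IsNMaximal, exists_eq_left, isMaximalIn_iff_covBy, covBy_top_iff]

theorem IsNMaximal.map_subtype (hM : IsNMaximal m M) {H : Subgroup M} (hH : IsNMaximal n H) :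
    IsNMaximal (m + n) (H.map M.subtype) := by
  induction n generalizing H with
  | zero =>
    obtain rfl : H = ⊤ := hH
    rwa [← MonoidHom.range_eq_map, range_subtype]
  | succ n ih =>
    obtain ⟨K, hK, hHK⟩ := hH
    rw [isMaximalIn_iff_covBy] at hHK
    exact ⟨_, ih hK, isMaximalIn_iff_covBy.2 (map_subtype_covBy_map_subtype hHK)⟩

theorem IsNMaximal.ne_top (hn : n ≠ 0) (h : IsNMaximal n H) : H ≠ ⊤ := by
  obtain ⟨n, rfl⟩ := Nat.exists_eq_succ_of_ne_zero hn
  obtain ⟨K, -, hK⟩ := h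
  exact (isMaximalIn_iff_covBy.1 hK).lt.ne_top

theorem exists_isNMaximal_ge_of_le_coheight [Finite G] (h : n ≤ Order.coheight H) :
    ∃ K, IsNMaximal n K ∧ H ≤ K := by
  induction n generalizing H with
  | zero => exact ⟨⊤, rfl, le_top⟩
  | succ n ih =>
    obtain ⟨L, hHL, hL⟩ : ∃ L > H, n ≤ Order.coheight L := by
      contrapose! h
      exact (Order.coheight_le_coe_iff.2 h).trans_lt (by exact_mod_cast n.lt_succ_self)
    obtain ⟨K, hK, hLK⟩ := ih hL
    obtain ⟨J, hHJ, hJK⟩ := exists_le_covBy_of_lt (hHL.trans_le hLK)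
    exact ⟨J, ⟨K, hK, isMaximalIn_iff_covBy.2 hJK⟩, hHJ⟩

theorem coheight_le_of_forall_isNMaximal_le [Finite G]
    (h : ∀ H : Subgroup G, IsNMaximal n H → H ≤ R) : Order.coheight R ≤ n :=
  Order.coheight_le_coe_iff.2 fun _ hR => lt_of_not_ge fun hn =>
    let ⟨H, hH, hle⟩ := exists_isNMaximal_ge_of_le_coheight hn
    (hR.trans_le hle).not_ge (h H hH)

end MaximalSubgroups

section SolvableSubnormality

/-- One step of a `K`-`𝔖`-subnormal chain, where `𝔖` is the class of soluble groups: either `H` is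
normal in `K`, or `K` modulo the core of `H` in `K` is soluble. -/
def IsKSolvableStep {G : Type*} [Group G] (H K : Subgroup G) : Prop :=
  H ≤ K ∧ ((H.subgroupOf K).Normal ∨ Group.IsSolvable (K ⧸ (H.subgroupOf K).normalCore))

/-- `H` is `K`-`𝔖`-subnormal in `G`, where `𝔖` is the class of soluble groups. This is
`IsKUSubnormal` with soluble instead of supersoluble steps; the chain is encoded by the reflexive
transitive closure. -/
def IsKSolvableSubnormal {G : Type*} [Group G] (H : Subgroup G) : Prop :=
  Relation.ReflTransGen IsKSolvableStep H ⊤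

variable {G G' : Type*} [Group G] [Group G'] {H K : Subgroup G}

theorem IsKUSubnormal.isKSolvableSubnormal (h : IsKUSubnormal H) : IsKSolvableSubnormal H := by
  obtain ⟨n, c, hfirst, hlast, hstep⟩ := h
  have hterm : ∀ i, Relation.ReflTransGen IsKSolvableStep H (c i) :=
    Fin.induction (hfirst ▸ .refl) fun i ih =>
      ih.tail ⟨(hstep i).1, (hstep i).2.imp_right IsSupersoluble.isSolvable⟩
  have := hterm (Fin.last n)
  rwa [hlast] at this

theorem IsKSolvableStep.comap (h : IsKSolvableStep H K) (f : G' →* G) :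
    IsKSolvableStep (H.comap f) (K.comap f) := by
  refine ⟨comap_mono h.1, h.2.imp (fun hnormal => hnormal.comap (f.subgroupComap K)) ?_⟩
  simp only [isSolvable_quotient_normalCore_iff]
  exact fun ⟨n, hn⟩ => ⟨n, derivedSeries_le_comap (f := f.subgroupComap K) hn⟩

theorem IsKSolvableSubnormal.comap (h : IsKSolvableSubnormal H) (f : G' →* G) :
    IsKSolvableSubnormal (H.comap f) :=
  Relation.ReflTransGen.lift (Subgroup.comap f)
    (fun _ _ (hstep : IsKSolvableStep _ _) => hstep.comap f) _ _ h

theorem IsKSolvableStep.normal_or_derivedSeries_le (h : IsKSolvableStep H ⊤) :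
    H.Normal ∨ ∃ n, derivedSeries G n ≤ H := by
  let toTop : G →* (⊤ : Subgroup G) := topEquiv.symm.toMonoidHom
  refine h.2.imp (fun hnormal => hnormal.comap toTop) ?_
  rw [isSolvable_quotient_normalCore_iff]
  exact fun ⟨n, hn⟩ => ⟨n, derivedSeries_le_comap (f := toTop) hn⟩

theorem IsKSolvableSubnormal.exists_ne_top (h : IsKSolvableSubnormal H) (hH : H ≠ ⊤) :
    ∃ L, H ≤ L ∧ L ≠ ⊤ ∧ (L.Normal ∨ ∃ n, derivedSeries G n ≤ L) := by
  induction h using Relation.ReflTransGen.head_induction_on with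
  | refl => exact absurd rfl hH
  | @head H K hHK _ ih =>
    by_cases hK : K = ⊤
    · subst hK
      exact ⟨H, le_rfl, hH, hHK.normal_or_derivedSeries_le⟩
    · obtain ⟨L, hKL, hL⟩ := ih hK
      exact ⟨L, hHK.1.trans hKL, hL⟩

theorem isSolvable_of_forall_isCoatom_isKSolvableSubnormal [Finite G]
    (h : ∀ M : Subgroup G, IsCoatom M → IsKSolvableSubnormal M) : Group.IsSolvable G := by
  refine isSolvable_of_forall_isCoatom_derivedSeries_le fun M hM => ?_
  obtain ⟨L, hML, hL, hstep⟩ := (h M hM).exists_ne_top hM.1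
  obtain rfl : L = M := (hM.le_iff.1 hML).resolve_left hL
  refine hstep.elim (fun _ => isSolvable_quotient_iff_exists_derivedSeries_le.1 ?_) id
  have : IsSimpleOrder (Set.Ici L) := Set.isSimpleOrder_Ici_iff_isCoatom.2 hM
  apply isSolvable_of_krullDim_subgroup_le_three
  rw [krullDim_subgroup_quotient, Order.coheight_eq_krullDim_Ici, Order.krullDim_of_isSimpleOrder]
  norm_num

theorem isSolvable_of_forall_isNMaximal_isKSolvableSubnormal [Finite G] {n : ℕ} (hn₀ : n ≠ 0)
    (hn : n ≤ 3) (hmax : ∀ M : Subgroup G, IsCoatom M → Group.IsSolvable M)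
    (h : ∀ H : Subgroup G, IsNMaximal n H → IsKSolvableSubnormal H) : Group.IsSolvable G := by
  by_contra hG
  obtain ⟨R, ⟨_, _⟩, hR⟩ := exists_isGreatest_normal_isSolvable G
  have hle : ∀ H : Subgroup G, IsNMaximal n H → H ≤ R := by
    intro H hH
    obtain ⟨L, hHL, hL, hstep⟩ := (h H hH).exists_ne_top (hH.ne_top hn₀)
    have : Group.IsSolvable L := by
      obtain ⟨M, hM, hLM⟩ := (eq_top_or_exists_le_coatom L).resolve_left hL
      have := hmax M hM
      exact isSolvable_of_le hLM
    have hnormal : L.Normal :=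
      hstep.resolve_right fun ⟨_, hm⟩ => hG (isSolvable_of_derivedSeries_le hm)
    exact hHL.trans (hR ⟨hnormal, this⟩)
  have hquot : Group.IsSolvable (G ⧸ R) := by
    apply isSolvable_of_krullDim_subgroup_le_three
    rw [krullDim_subgroup_quotient]
    exact WithBot.coe_le_coe.2 <|
      (coheight_le_of_forall_isNMaximal_le hle).trans (by exact_mod_cast hn)
  exact hG ((Group.isSolvable_iff_subgroup_quotient R).2 ⟨inferInstance, hquot⟩)

end SolvableSubnormality

theorem solvable_of_3maximal_KUsubnormal_general {n : ℕ} (hn₁ : 1 ≤ n) (hn₃ : n ≤ 3)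
    (G : Type*) [Group G] [Finite G]
    (h : ∀ H : Subgroup G, IsNMaximal n H → IsKSolvableSubnormal H) :
    Group.IsSolvable G := by
  induction n, hn₁ using Nat.le_induction generalizing G with
  | base =>
    exact isSolvable_of_forall_isCoatom_isKSolvableSubnormal fun M hM =>
      h M (isNMaximal_one_iff.2 hM)
  | succ n _ ih =>
    refine isSolvable_of_forall_isNMaximal_isKSolvableSubnormal n.succ_ne_zero hn₃
      (fun M hM => ?_) h
    refine ih (n.le_succ.trans hn₃) M fun H hH => ?_
    have hmap : IsNMaximal (n + 1) (H.map M.subtype) :=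
      n.add_comm 1 ▸ (isNMaximal_one_iff.2 hM).map_subtype hH
    exact comap_map_eq_self_of_injective M.subtype_injective H ▸ (h _ hmap).comap M.subtype

/-- If every `3`-maximal subgroup of `G` is `K`-`𝔘`-subnormal in `G`, then `G` is soluble. -/
theorem solvable_of_3maximal_KUsubnormal (G : Type*) [Group G] [Finite G]
    (h : ∀ H : Subgroup G, IsNMaximal 3 H → IsKUSubnormal H) :
    IsSolvable G :=
  solvable_of_3maximal_KUsubnormal_general (by norm_num) le_rfl G fun H hH =>
    (h H hH).isKSolvableSubnormal
end

section
/- Let H and K be subgroups of a finite group G with H K-𝔘-subnormal in G. Then H ∩ K is K-𝔘-subnormal in K. -/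
open Subgroup

/-!
Intersect every term of a chain from `H` with `K`. If `A ≤ B` is a step of the chain, then
`A ∩ K` is the preimage of `A` under the inclusion `B ∩ K → B`, and the preimage of the core of
`A` in `B` lies in the core of `A ∩ K` in `B ∩ K`. Hence the quotient of `B ∩ K` by the latter core
is a quotient of a subgroup of the quotient of `B` by the former, and supersolubility passes to
subgroups and quotients.
-/

section Supersoluble

variable {G H : Type*} [Group G] [Group H]

lemma quotientMap_comap_injective (f : G →* H) (N : Subgroup H) [N.Normal] :
    Function.Injective (QuotientGroup.map (N.comap f) N f le_rfl) := by
  rw [← MonoidHom.ker_eq_bot_iff, QuotientGroup.ker_map, QuotientGroup.map_mk'_self]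

lemma IsSupersoluble.of_injective_s7 (hH : IsSupersoluble H) (f : G →* H)
    (hf : Function.Injective f) : IsSupersoluble G := by
  obtain ⟨n, c, hc, hbot, htop, hstep⟩ := hH
  refine ⟨n, fun i => (c i).comap f, fun i => (hc i).comap f, ?_, ?_, fun i => ?_⟩
  · simp only [hbot, MonoidHom.comap_bot, f.ker_eq_bot_iff.mpr hf]
  · simp only [htop, comap_top]
  · obtain ⟨hle, hcyclic⟩ := hstep i
    have := (hc i.castSucc).subgroupOf (c i.succ)
    exact ⟨comap_mono hle, isCyclic_of_injective _ (quotientMap_comap_injective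
      (f.subgroupComap (c i.succ)) ((c i.castSucc).subgroupOf (c i.succ)))⟩

lemma IsSupersoluble.of_surjective_s7 (hG : IsSupersoluble G) (f : G →* H)
    (hf : Function.Surjective f) : IsSupersoluble H := by
  obtain ⟨n, c, hc, hbot, htop, hstep⟩ := hG
  have hmap (i) : ((c i).map f).Normal := (hc i).map f hf
  refine ⟨n, fun i => (c i).map f, hmap, ?_, ?_, fun i => ?_⟩
  · simp only [hbot, Subgroup.map_bot]
  · simp only [htop, map_top_of_surjective f hf]
  · obtain ⟨hle, hcyclic⟩ := hstep i
    have := (hc i.castSucc).subgroupOf (c i.succ)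
    have := (hmap i.castSucc).subgroupOf ((c i.succ).map f)
    have hcomap : (c i.castSucc).subgroupOf (c i.succ) ≤
        (((c i.castSucc).map f).subgroupOf ((c i.succ).map f)).comap
          (f.subgroupMap (c i.succ)) :=
      fun x hx => mem_map_of_mem f hx
    exact ⟨map_mono hle, isCyclic_of_surjective (QuotientGroup.map _ _ _ hcomap)
      (QuotientGroup.map_surjective_of_surjective _ _ _
        ((QuotientGroup.mk'_surjective _).comp (f.subgroupMap_surjective _)) hcomap)⟩

lemma IsSupersoluble.quotient_normalCore_comap {A : Subgroup H}
    (hA : IsSupersoluble (H ⧸ A.normalCore)) (f : G →* H) :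
    IsSupersoluble (G ⧸ (A.comap f).normalCore) := by
  have hcore : A.normalCore.comap f ≤ (A.comap f).normalCore :=
    normal_le_normalCore.mpr (comap_mono A.normalCore_le)
  have hcomap : IsSupersoluble (G ⧸ A.normalCore.comap f) :=
    hA.of_injective_s7 _ (quotientMap_comap_injective f A.normalCore)
  exact hcomap.of_surjective_s7 (QuotientGroup.map _ _ (MonoidHom.id G) hcore)
    (QuotientGroup.map_surjective_of_surjective _ _ (MonoidHom.id G)
      (QuotientGroup.mk'_surjective _) hcore)

lemma IsSupersoluble.quotient_normalCore_inf {A B : Subgroup G}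
    (h : IsSupersoluble (B ⧸ (A.subgroupOf B).normalCore)) (K : Subgroup G) :
    IsSupersoluble (↥(B ⊓ K) ⧸ ((A ⊓ K).subgroupOf (B ⊓ K)).normalCore) := by
  have hinf : (A ⊓ K).subgroupOf (B ⊓ K) =
      (A.subgroupOf B).comap (inclusion (inf_le_left : B ⊓ K ≤ B)) := by
    rw [comap_inclusion_subgroupOf, subgroupOf_inj, inf_assoc, inf_eq_right.mpr inf_le_right]
  rw [hinf]
  exact h.quotient_normalCore_comap _

end Supersoluble

theorem inf_KUsubnormalIn_of_KUsubnormal_general {G : Type*} [Group G] {H L : Subgroup G}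
    (h : IsKUSubnormalIn H L) (K : Subgroup G) : IsKUSubnormalIn (H ⊓ K) (L ⊓ K) := by
  obtain ⟨n, c, rfl, rfl, hstep⟩ := h
  refine ⟨n, fun i => c i ⊓ K, rfl, rfl, fun i => ?_⟩
  obtain ⟨hle, hnormal | hsupersoluble⟩ := hstep i
  · exact ⟨inf_le_inf_right K hle, .inl (inf_subgroupOf_inf_normal_of_left K)⟩
  · exact ⟨inf_le_inf_right K hle, .inr (hsupersoluble.quotient_normalCore_inf K)⟩

/-- If `H` is `K`-`𝔘`-subnormal in `G` and `K` is any subgroup of `G`, then `H ∩ K`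
is `K`-`𝔘`-subnormal in `K`. -/
theorem inf_KUsubnormalIn_of_KUsubnormal (G : Type*) [Group G] [Finite G]
    (H K : Subgroup G) (h : IsKUSubnormal H) :
    IsKUSubnormalIn (H ⊓ K) K := by
  simpa only [top_inf_eq] using inf_KUsubnormalIn_of_KUsubnormal_general h K
end
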